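/- For every measurable F : (X × {−1,1})^m → [0,1], every label distribution 𝒟' consistent with 𝒟, and every index 1 ≤ i ≤ m, the consecutive hybrid values satisfy a_{i−1}(F) − a_i(F) = (1/2) · E_{(x,y)∼𝒟'}[y · h_i(x)]. -/

import Mathlib

/-!
Consecutive hybrid measures differ only in the law of coordinate `i`: it is `D'` in one and
`D ⊗ U` in the other. Resampling a single coordinate of a product measure
(`map_update_pi`) together with Fubini writes both hybrid values as integrals of the same
function `W (x, b)`, the expectation of `F` with coordinate `i` planted to `(x, b)`, against `D'`
and `D ⊗ U`. As `D` is the marginal of `D'`, the second integral is the `D'`-integral of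
`(W (x, 1) + W (x, -1)) / 2`, and pointwise
`W (x, y) - (W (x, 1) + W (x, -1)) / 2 = y * (W (x, 1) - W (x, -1)) / 2`.
-/

open MeasureTheory ProbabilityTheory

noncomputable section

/-- The ±1 real value of a Boolean label (`true` encodes the label 1, `false` the label −1). -/
def sgn (b : Bool) : ℝ := if b then 1 else -1

/-- The uniform probability measure on the labels {−1, 1} (encoded as `Bool`). -/
def unifLabel : Measure Bool := (PMF.uniformOfFintype Bool).toMeasure

instance : IsProbabilityMeasure unifLabel :=
  PMF.toMeasure.isProbabilityMeasure _

/-- The hybrid product measure on `(X × {−1,1})^m` in which the coordinates of index `< i`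
are drawn i.i.d. from `P = 𝒟 ⊗ U` and the remaining coordinates are drawn i.i.d. from `𝒟'`. -/
def hybridMeasure {X : Type*} [MeasurableSpace X] (m : ℕ) (D : Measure X)
    (D' : Measure (X × Bool)) (i : ℕ) : Measure (Fin m → X × Bool) :=
  Measure.pi (fun j : Fin m => if (j : ℕ) < i then D.prod unifLabel else D')

/-- The hybrid value `a_i(F) = ∫ F d(P^{⊗i} ⊗ (𝒟')^{⊗(m−i)})`: the first `i` coordinates are
drawn i.i.d. from `P = 𝒟 ⊗ U` and the remaining `m − i` are drawn i.i.d. from `𝒟'`. -/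
def hybridVal {X : Type*} [MeasurableSpace X] (m : ℕ) (D : Measure X)
    (D' : Measure (X × Bool)) (F : (Fin m → X × Bool) → ℝ) (i : ℕ) : ℝ :=
  ∫ z, F z ∂(hybridMeasure m D D' i)

/-- The hybrid function `W_{i,b}(x)`: run `F` with the `i`-th coordinate planted to `(x, b)`,
the coordinates before `i` drawn i.i.d. from `P = 𝒟 ⊗ U` and the coordinates after `i` drawn
i.i.d. from `𝒟'`.  (The `i`-th coordinate of the integration variable is overwritten by
`Function.update`, so integrating it out over a probability measure has no effect.)
Here `i` is the 0-based index corresponding to the paper's 1-based index `i + 1`. -/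
def hybridW {X : Type*} [MeasurableSpace X] (m : ℕ) (D : Measure X)
    (D' : Measure (X × Bool)) (F : (Fin m → X × Bool) → ℝ) (i : Fin m) (b : Bool)
    (x : X) : ℝ :=
  ∫ z, F (Function.update z i (x, b)) ∂(hybridMeasure m D D' i)

/-- The hybrid hypothesis `h_i(x) = W_{i,1}(x) − W_{i,−1}(x) ∈ [−1,1]`. -/
def hybridHyp {X : Type*} [MeasurableSpace X] (m : ℕ) (D : Measure X)
    (D' : Measure (X × Bool)) (F : (Fin m → X × Bool) → ℝ) (i : Fin m) (x : X) : ℝ :=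
  hybridW m D D' F i true x - hybridW m D D' F i false x

/-- Overwriting coordinate `i` of a sample from a product of probability measures by an
independent sample from `ν` replaces the `i`-th factor by `ν`. -/
lemma map_update_pi {ι Y : Type*} [Fintype ι] [DecidableEq ι] [MeasurableSpace Y]
    (μ : ι → Measure Y) [∀ j, IsProbabilityMeasure (μ j)] (ν : Measure Y)
    [IsProbabilityMeasure ν] (i : ι) :
    (ν.prod (Measure.pi μ)).map (fun p => Function.update p.2 i p.1)
      = Measure.pi (Function.update μ i ν) := by
  have hprob : ∀ j, IsProbabilityMeasure (Function.update μ i ν j) := by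
    intro j
    by_cases h : j = i
    · subst h; simpa
    · simpa [Function.update_of_ne h] using inferInstanceAs (IsProbabilityMeasure (μ j))
  have hmeas : Measurable (fun p : Y × (ι → Y) => Function.update p.2 i p.1) :=
    measurable_update'.comp measurable_swap
  symm
  refine Measure.pi_eq fun s hs => ?_
  rw [Measure.map_apply hmeas (MeasurableSet.univ_pi hs)]
  have hpre : (fun p : Y × (ι → Y) => Function.update p.2 i p.1) ⁻¹' Set.univ.pi s
      = s i ×ˢ Set.univ.pi (Function.update s i Set.univ) := by
    ext ⟨y, z⟩
    simp only [Set.mem_preimage, Set.mem_pi, Set.mem_univ, true_implies, Set.mem_prod]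
    constructor
    · intro h
      refine ⟨by simpa using h i, fun j => ?_⟩
      by_cases hj : j = i
      · subst hj; simp
      · simpa [Function.update_of_ne hj] using h j
    · rintro ⟨hy, hz⟩ j
      by_cases hj : j = i
      · subst hj; simpa using hy
      · simpa [Function.update_of_ne hj] using hz j
  rw [hpre, Measure.prod_prod, Measure.pi_pi,
    ← Finset.mul_prod_erase _ _ (Finset.mem_univ i),
    ← Finset.mul_prod_erase _ (fun j => Function.update μ i ν j (s j)) (Finset.mem_univ i)]
  simp only [Function.update_self, measure_univ, one_mul]
  congr 1
  refine Finset.prod_congr rfl fun j hj => ?_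
  have hj' := Finset.ne_of_mem_erase hj
  simp [Function.update_of_ne hj']

/-- Fubini for a product measure with its `i`-th factor replaced by `ν`: that coordinate is
integrated last. -/
lemma integral_pi_update {ι Y : Type*} [Fintype ι] [DecidableEq ι] [MeasurableSpace Y]
    (μ : ι → Measure Y) [∀ j, IsProbabilityMeasure (μ j)] (ν : Measure Y)
    [IsProbabilityMeasure ν] (i : ι) (F : (ι → Y) → ℝ) (hF : Measurable F)
    (hb : ∀ z, F z ∈ Set.Icc (0 : ℝ) 1) :
    ∫ z, F z ∂(Measure.pi (Function.update μ i ν))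
      = ∫ y, ∫ z, F (Function.update z i y) ∂(Measure.pi μ) ∂ν := by
  have hmeas : Measurable (fun p : Y × (ι → Y) => Function.update p.2 i p.1) :=
    measurable_update'.comp measurable_swap
  rw [← map_update_pi, integral_map hmeas.aemeasurable hF.aestronglyMeasurable, integral_prod]
  exact Integrable.of_mem_Icc 0 1 (hF.comp hmeas).aemeasurable (ae_of_all _ fun _ => hb _)

/-- The expectation over a uniform label is the average of the two values. -/
lemma integral_unifLabel (f : Bool → ℝ) :
    ∫ b, f b ∂unifLabel = (f true + f false) / 2 := by
  unfold unifLabel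
  rw [PMF.integral_eq_sum]
  simp
  ring

/-- For every measurable `F : (X × {−1,1})^m → [0,1]`, every label
distribution `𝒟'` consistent with `𝒟`, and every index `1 ≤ i ≤ m` (here represented by the
0-based index `i : Fin m`, so that the paper's `a_{i−1}` and `a_i` are `hybridVal … i` and
`hybridVal … (i+1)`), the consecutive hybrid values satisfy
`a_{i−1}(F) − a_i(F) = (1/2)·E_{(x,y)∼𝒟'}[y·h_i(x)]`. -/
theorem consecutive_hybrids_eq_half_correlation
    {X : Type*} [MeasurableSpace X]
    (D : Measure X) [IsProbabilityMeasure D]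
    (D' : Measure (X × Bool)) [IsProbabilityMeasure D']
    (hD' : D'.map Prod.fst = D)
    (m : ℕ) (F : (Fin m → X × Bool) → ℝ) (hFmeas : Measurable F)
    (hFbd : ∀ z, F z ∈ Set.Icc (0 : ℝ) 1)
    (i : Fin m) :
    hybridVal m D D' F (i : ℕ) - hybridVal m D D' F ((i : ℕ) + 1)
      = (1 / 2) * ∫ z, sgn z.2 * hybridHyp m D D' F i z.1 ∂D' := by
  classical
  subst hD'
  set D := D'.map Prod.fst with hD
  set μ : Fin m → Measure (X × Bool) :=
    fun j => if (j : ℕ) < i then D.prod unifLabel else D' with hμ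
  have hprob : ∀ j, IsProbabilityMeasure (μ j) := by
    intro j
    by_cases h : (j : ℕ) < i
    · simp only [hμ, h, if_true]; infer_instance
    · simp only [hμ, h, if_false]; infer_instance
  have h0 : hybridMeasure m D D' i = Measure.pi (Function.update μ i D') := by
    have : Function.update μ i D' = μ := by simp [hμ]
    rw [this]; rfl
  have h1 : hybridMeasure m D D' ((i : ℕ) + 1)
      = Measure.pi (Function.update μ i (D.prod unifLabel)) := by
    unfold hybridMeasure
    congr 1
    funext j
    by_cases hj : j = i
    · subst hj; simp
    · have hne : (j : ℕ) ≠ i := fun h => hj (Fin.ext h)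
      have hiff : (j : ℕ) < i + 1 ↔ (j : ℕ) < i := by omega
      simp [Function.update_of_ne hj, hμ, hiff]
  let W : X × Bool → ℝ := fun y => ∫ z, F (Function.update z i y) ∂(Measure.pi μ)
  have hmeas : Measurable
      (fun p : (X × Bool) × (Fin m → X × Bool) => Function.update p.2 i p.1) :=
    measurable_update'.comp measurable_swap
  have hWm : Measurable W :=
    ((hFmeas.comp hmeas).stronglyMeasurable.integral_prod_right'
      (ν := Measure.pi μ)).measurable
  have hWb : ∀ y, W y ∈ Set.Icc (0 : ℝ) 1 := by
    intro y
    refine ⟨integral_nonneg fun z => (hFbd _).1, ?_⟩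
    have hle := integral_mono_of_nonneg (μ := Measure.pi μ)
      (ae_of_all _ fun z => (hFbd (Function.update z i y)).1)
      (integrable_const (1 : ℝ)) (ae_of_all _ fun z => (hFbd (Function.update z i y)).2)
    simpa using hle
  have hWint : ∀ (ρ : Measure (X × Bool)) [IsProbabilityMeasure ρ]
      (g : X × Bool → X × Bool), Measurable g → Integrable (fun z => W (g z)) ρ :=
    fun ρ _ g hg => Integrable.of_mem_Icc 0 1 (hWm.comp hg).aemeasurable
      (ae_of_all _ fun _ => hWb _)
  have hfst (b : Bool) : Measurable fun z : X × Bool => (z.1, b) := by fun_prop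
  have e0 : hybridVal m D D' F i = ∫ y, W y ∂D' := by
    rw [hybridVal, h0, integral_pi_update μ D' i F hFmeas hFbd]
  have e1 : hybridVal m D D' F ((i : ℕ) + 1)
      = ∫ z, (W (z.1, true) + W (z.1, false)) / 2 ∂D' := by
    rw [hybridVal, h1, integral_pi_update μ _ i F hFmeas hFbd]
    change ∫ y, W y ∂(D.prod unifLabel) = _
    have hWP : Integrable W (D.prod unifLabel) := hWint _ id measurable_id
    rw [integral_prod W hWP]
    simp only [integral_unifLabel]
    rw [hD, integral_map measurable_fst.aemeasurable]
    exact (by fun_prop : Measurable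
      fun x => (W (x, true) + W (x, false)) / 2).aestronglyMeasurable
  have hW : Integrable W D' := hWint D' id measurable_id
  have hA : Integrable (fun z : X × Bool => (W (z.1, true) + W (z.1, false)) / 2) D' :=
    ((hWint D' _ (hfst true)).add (hWint D' _ (hfst false))).div_const 2
  rw [e0, e1, ← integral_sub hW hA, ← integral_const_mul]
  refine integral_congr_ae (ae_of_all _ ?_)
  rintro ⟨x, b⟩
  change W (x, b) - (W (x, true) + W (x, false)) / 2
    = 1 / 2 * (sgn b * (W (x, true) - W (x, false)))
  cases b <;> simp [sgn] <;> ring
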